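/- arXiv:0806.2820 — 3 statements merged into one kernel-verified Lean document; each statement's English description precedes it below -/
import Mathlib

section
/- A linear map T on d×d complex matrices that is positive and trace-preserving satisfies ‖T‖_{2→2} ≤ 1 (i.e., its matrix representation on Hilbert–Schmidt space is a contraction in operator norm) if and only if T is unital, i.e., T(I) = I. Consequently, T is unital iff its Hilbert–Schmidt matrix representation is a convex combination of unitary matrices on C^{d²}. -/
open Matrix
open scoped ComplexOrder

/-!
If `T 1 = 1`, Kadison's inequality `T X * T X ≤ T (X * X)` for Hermitian `X`, which expresses the
nonnegativity of a variance, and preservation of the trace give `‖T X‖ ≤ ‖X‖`; since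
`‖X + i Y‖² = ‖X‖² + ‖Y‖²` for Hermitian `X` and `Y`, `T` is a contraction. Conversely, preservation
of the trace gives `⟪1, T 1⟫ = ‖1‖²`, so a contraction `T` attains equality in the Cauchy–Schwarz
inequality for `1` and `T 1`, and `T 1 = 1`.

Every contraction `f` of a finite-dimensional Hilbert space is a midpoint of two unitaries: write
`f = u |f|` with `u` unitary, and `|f|` as the real part of the unitary `|f| + i √(1 - |f|²)`.
-/

section ConvexHullUnitary

theorem exists_linearIsometry_comp_eq {𝕜 E F : Type*} [RCLike 𝕜] [NormedAddCommGroup E]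
    [InnerProductSpace 𝕜 E] [FiniteDimensional 𝕜 E] [AddCommGroup F] [Module 𝕜 F]
    {f g : F →ₗ[𝕜] E} (h : ∀ x, ‖f x‖ = ‖g x‖) : ∃ u : E →ₗᵢ[𝕜] E, u.toLinearMap ∘ₗ f = g := by
  have hker : LinearMap.ker f ≤ LinearMap.ker g := fun x hx ↦ by
    rw [LinearMap.mem_ker] at hx ⊢
    rw [← norm_eq_zero, ← h, hx, norm_zero]
  let v : LinearMap.range f →ₗ[𝕜] E :=
    (LinearMap.ker f).liftQ g hker ∘ₗ f.quotKerEquivRange.symm.toLinearMap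
  have hv (x : F) : v ⟨f x, LinearMap.mem_range_self f x⟩ = g x := by
    simp [v, LinearMap.quotKerEquivRange_symm_apply_image]
  let w : LinearMap.range f →ₗᵢ[𝕜] E := ⟨v, by
    rintro ⟨_, x, rfl⟩
    rw [hv]
    exact (h x).symm⟩
  exact ⟨w.extend, LinearMap.ext fun x ↦
    (w.extend_apply ⟨f x, LinearMap.mem_range_self f x⟩).trans (hv x)⟩

variable {E : Type*} [NormedAddCommGroup E] [InnerProductSpace ℂ E]

theorem norm_cfcAbs_apply [CompleteSpace E] (f : E →L[ℂ] E) (x : E) : ‖CFC.abs f x‖ = ‖f x‖ := by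
  have habs : star (CFC.abs f) * CFC.abs f = star f * f := by
    rw [(CFC.abs_nonneg f).star_eq, CFC.abs_mul_abs]
  rw [← sq_eq_sq₀ (norm_nonneg _) (norm_nonneg _),
    ContinuousLinearMap.apply_norm_sq_eq_inner_adjoint_left,
    ContinuousLinearMap.apply_norm_sq_eq_inner_adjoint_left]
  exact congr(RCLike.re (inner ℂ ($habs x) x))

theorem exists_eq_unitary_mul_abs [FiniteDimensional ℂ E] [CompleteSpace E] (f : E →L[ℂ] E) :
    ∃ u ∈ unitary (E →L[ℂ] E), f = u * CFC.abs f := by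
  obtain ⟨u, hu⟩ := exists_linearIsometry_comp_eq
    (f := (CFC.abs f : E →L[ℂ] E).toLinearMap) (g := f.toLinearMap) (norm_cfcAbs_apply f)
  refine ⟨_, (Unitary.linearIsometryEquiv.symm (u.toLinearIsometryEquiv rfl)).2, ?_⟩
  ext x
  exact congr($hu.symm x)

theorem exists_unitary_midpoint_star_eq {A : Type*} [CStarAlgebra A] {a : A} (ha : IsSelfAdjoint a)
    (hnorm : ‖a‖ ≤ 1) : ∃ u ∈ unitary A, midpoint ℝ u (star u) = a := by
  let _ := CStarAlgebra.spectralOrder A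
  let _ := CStarAlgebra.spectralOrderedRing A
  let u := selfAdjoint.unitarySelfAddISMul ⟨a, ha⟩ hnorm
  refine ⟨u, u.2, ?_⟩
  rw [midpoint_eq_smul_add, invOf_eq_inv, ← realPart_apply_coe]
  exact congr(($(selfAdjoint.realPart_unitarySelfAddISMul ⟨a, ha⟩ hnorm) : A))

theorem convexHull_unitary_eq_closedBall [FiniteDimensional ℂ E] [CompleteSpace E] :
    convexHull ℝ (unitary (E →L[ℂ] E) : Set (E →L[ℂ] E)) = Metric.closedBall 0 1 := by
  refine (convexHull_min (fun u hu ↦ ?_) (convex_closedBall 0 1)).antisymm fun f hf ↦ ?_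
  · exact mem_closedBall_zero_iff.mpr (u.opNorm_le_bound zero_le_one fun x ↦ by
      rw [u.norm_map_of_mem_unitary hu, one_mul])
  · obtain ⟨u, hu, hfu⟩ := exists_eq_unitary_mul_abs f
    obtain ⟨v, hv, hvf⟩ := exists_unitary_midpoint_star_eq (CFC.abs_nonneg f).isSelfAdjoint
      (CFC.norm_abs.trans_le (mem_closedBall_zero_iff.mp hf))
    have hmid : midpoint ℝ (u * v) (u * star v) = f := by
      rw [hfu, ← hvf]
      simp only [midpoint_eq_smul_add, mul_smul_comm, mul_add]
    rw [← hmid]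
    exact (convex_convexHull ℝ _).midpoint_mem (subset_convexHull ℝ _ (mul_mem hu hv))
      (subset_convexHull ℝ _ (mul_mem hu (Unitary.star_mem hv)))

theorem norm_map_le_iff_exists_convexCombination_unitary [FiniteDimensional ℂ E] (f : E →ₗ[ℂ] E) :
    (∀ x, ‖f x‖ ≤ ‖x‖) ↔ ∃ (n : ℕ) (p : Fin n → ℝ) (W : Fin n → E →ₗ[ℂ] E),
      (∀ i, 0 ≤ p i) ∧ ∑ i, p i = 1 ∧ (∀ i x y, inner ℂ (W i x) (W i y) = inner ℂ x y) ∧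
      (∀ i, Function.Surjective (W i)) ∧ ∀ x, f x = ∑ i, (p i : ℂ) • W i x := by
  have : CompleteSpace E := FiniteDimensional.complete ℂ E
  constructor
  · intro hf
    have hmem : f.toContinuousLinearMap ∈
        convexHull ℝ (unitary (E →L[ℂ] E) : Set (E →L[ℂ] E)) := by
      rw [convexHull_unitary_eq_closedBall, mem_closedBall_zero_iff]
      exact ContinuousLinearMap.opNorm_le_bound _ zero_le_one fun x ↦ by simpa using hf x
    obtain ⟨ι, _, p, u, hp, hp1, hu, hsum⟩ := mem_convexHull_iff_exists_fintype.mp hmem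
    let e := (Fintype.equivFin ι).symm
    let W (i : Fin (Fintype.card ι)) : unitary (E →L[ℂ] E) := ⟨u (e i), hu (e i)⟩
    refine ⟨Fintype.card ι, p ∘ e, fun i ↦ (W i : E →L[ℂ] E).toLinearMap, fun i ↦ hp _,
      (e.sum_comp p).trans hp1, fun i ↦ Unitary.inner_map_map (W i),
      fun i ↦ (Unitary.linearIsometryEquiv (W i)).surjective, fun x ↦ ?_⟩
    calc f x = (∑ i, p i • u i) x := congr($hsum.symm x)
      _ = ∑ i, (p i : ℂ) • u i x := by simp
      _ = _ := (e.sum_comp fun i ↦ (p i : ℂ) • u i x).symm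
  · rintro ⟨n, p, W, hp, hp1, hW, -, hf⟩ x
    have hnorm (i : Fin n) : ‖W i x‖ = ‖x‖ := ((W i).isometryOfInner (hW i)).norm_map x
    calc ‖f x‖ ≤ ∑ i, ‖(p i : ℂ) • W i x‖ := hf x ▸ norm_sum_le _ _
      _ = ∑ i, p i * ‖x‖ := by
        simp only [norm_smul, hnorm, Complex.norm_real, Real.norm_of_nonneg (hp _)]
      _ = ‖x‖ := by rw [← Finset.sum_mul, hp1, one_mul]

end ConvexHullUnitary

section Kadison

theorem sum_smul_mul_self_le {ι A : Type*} [Ring A] [StarRing A] [PartialOrder A]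
    [StarOrderedRing A] [Algebra ℝ A] [StarModule ℝ A] (s : Finset ι) (c : ι → ℝ) {q : ι → A}
    (hq : ∀ i ∈ s, 0 ≤ q i) (hsum : ∑ i ∈ s, q i ≤ 1) :
    (∑ i ∈ s, c i • q i) * ∑ i ∈ s, c i • q i ≤ ∑ i ∈ s, c i ^ 2 • q i := by
  set y := ∑ i ∈ s, c i • q i with hy
  have hsa : IsSelfAdjoint y := isSelfAdjoint_sum s fun i hi ↦
    (IsSelfAdjoint.all (c i)).smul (.of_nonneg (hq i hi))
  have hvar : 0 ≤ ∑ i ∈ s, (algebraMap ℝ A (c i) - y) * q i * (algebraMap ℝ A (c i) - y) :=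
    Finset.sum_nonneg fun i hi ↦ IsSelfAdjoint.conjugate_nonneg (hq i hi)
      (((IsSelfAdjoint.all (c i)).algebraMap A).sub hsa)
  have hexpand : ∑ i ∈ s, (algebraMap ℝ A (c i) - y) * q i * (algebraMap ℝ A (c i) - y) =
      ∑ i ∈ s, c i ^ 2 • q i - y * y - y * y + y * (∑ i ∈ s, q i) * y := by
    have hterm (i : ι) : (algebraMap ℝ A (c i) - y) * q i * (algebraMap ℝ A (c i) - y) =
        c i ^ 2 • q i - (c i • q i) * y - y * (c i • q i) + y * q i * y := by
      simp only [Algebra.algebraMap_eq_smul_one, sub_mul, mul_sub, smul_mul_assoc, one_mul,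
        mul_smul_comm, mul_one, smul_sub, sq, mul_smul]
      abel
    simp only [hterm, Finset.sum_add_distrib, Finset.sum_sub_distrib, ← Finset.sum_mul,
      ← Finset.mul_sum, ← hy]
  have hconj : y * (∑ i ∈ s, q i) * y ≤ y * y := by
    simpa using hsa.conjugate_le_conjugate hsum
  rw [← sub_nonneg]
  calc 0 ≤ _ := hvar
    _ ≤ ∑ i ∈ s, c i ^ 2 • q i - y * y - y * y + y * y := by rw [hexpand]; gcongr
    _ = _ := sub_add_cancel _ _

open scoped MatrixOrder

variable {n : Type*} [Fintype n] [DecidableEq n]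

theorem exists_spectral_resolution {𝕜 : Type*} [RCLike 𝕜] {X : Matrix n n 𝕜} (hX : X.IsHermitian) :
    ∃ P : n → Matrix n n 𝕜, (∀ i, 0 ≤ P i) ∧ ∑ i, P i = 1 ∧
      X = ∑ i, hX.eigenvalues i • P i ∧ X * X = ∑ i, hX.eigenvalues i ^ 2 • P i := by
  let Φ := Unitary.conjStarAlgAut 𝕜 _ hX.eigenvectorUnitary
  have hΦ (c : n → ℝ) :
      Φ (diagonal fun i ↦ (c i : 𝕜)) = ∑ i, c i • Φ (single i i 1) := by
    rw [← sum_single_eq_diagonal, map_sum]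
    refine Finset.sum_congr rfl fun i _ ↦ ?_
    rw [RCLike.real_smul_eq_coe_smul (K := 𝕜), ← map_smul, smul_single, smul_eq_mul, mul_one]
  have hX_eq : X = Φ (diagonal fun i ↦ (hX.eigenvalues i : 𝕜)) := hX.spectral_theorem
  refine ⟨fun i ↦ Φ (single i i 1), fun i ↦ map_nonneg Φ ?_, ?_, hX_eq.trans (hΦ _), ?_⟩
  · rw [← diagonal_single]
    exact (PosSemidef.diagonal (Pi.single_nonneg.mpr zero_le_one)).nonneg
  · simpa using (hΦ 1).symm
  · rw [← hΦ]
    conv_lhs => rw [hX_eq, ← map_mul, diagonal_mul_diagonal]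
    simp [sq]

theorem kadison_inequality {A : Type*} [Ring A] [StarRing A] [PartialOrder A]
    [StarOrderedRing A] [Algebra ℂ A] [StarModule ℂ A] (φ : Matrix n n ℂ →ₚ[ℂ] A) (hφ : φ 1 ≤ 1)
    {X : Matrix n n ℂ} (hX : X.IsHermitian) : φ X * φ X ≤ φ (X * X) := by
  obtain ⟨P, hP, hP1, hXP, hXXP⟩ := exists_spectral_resolution hX
  have hmap (c : n → ℝ) : φ (∑ i, c i • P i) = ∑ i, c i • φ (P i) := by
    simp only [map_sum, PositiveLinearMap.map_smul_of_tower]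
  rw [hXXP, hmap]
  conv_lhs => rw [hXP, hmap]
  exact sum_smul_mul_self_le _ _ (fun i _ ↦ map_nonneg φ (hP i)) (by rwa [← map_sum, hP1])

end Kadison

section HilbertSchmidt

theorem norm_sq_add_I_smul {E : Type*} [NormedAddCommGroup E] [InnerProductSpace ℂ E]
    [StarAddMonoid E] [StarModule ℂ E] [NormedStarGroup E] {x y : E} (hx : IsSelfAdjoint x)
    (hy : IsSelfAdjoint y) : ‖x + Complex.I • y‖ ^ 2 = ‖x‖ ^ 2 + ‖y‖ ^ 2 := by
  have hstar : ‖x - Complex.I • y‖ = ‖x + Complex.I • y‖ := by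
    rw [← norm_star (x + Complex.I • y)]
    simp [hx.star_eq, hy.star_eq, sub_eq_add_neg]
  have hlaw := parallelogram_law_with_norm ℂ x (Complex.I • y)
  rw [hstar, norm_smul, Complex.norm_I, one_mul] at hlaw
  linarith

open scoped Matrix.Norms.Frobenius MatrixOrder

variable {m n : Type*} [Fintype m] [Fintype n]

/-- The Hilbert–Schmidt inner product `⟪A, B⟫ = tr (Aᴴ B)`, whose norm is the Frobenius norm. -/
noncomputable local instance hilbertSchmidtInnerProductSpace :
    InnerProductSpace ℂ (Matrix m n ℂ) where
  inner A B := (Aᴴ * B).trace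
  norm_sq_eq_re_inner A := by
    rw [frobenius_norm_def, ← Real.sqrt_eq_rpow, Real.sq_sqrt (by positivity), Finset.sum_comm]
    simp [trace, mul_apply, ← Complex.normSq_eq_norm_sq, Complex.normSq_apply]
  conj_inner_symm A B := by
    rw [starRingEnd_apply, ← trace_conjTranspose, conjTranspose_mul, conjTranspose_conjTranspose]
  add_left A B C := by rw [conjTranspose_add, Matrix.add_mul, trace_add]
  smul_left A B c := by
    rw [conjTranspose_smul, smul_mul, trace_smul, smul_eq_mul, starRingEnd_apply]

theorem frobenius_norm_eq_sqrt_trace (A : Matrix m n ℂ) : ‖A‖ = √(Aᴴ * A).trace.re :=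
  norm_eq_sqrt_re_inner (𝕜 := ℂ) A

variable [DecidableEq n]

theorem eq_one_of_trace_eq_of_norm_le {A : Matrix n n ℂ} (htr : A.trace = (1 : Matrix n n ℂ).trace)
    (hnorm : ‖A‖ ≤ ‖(1 : Matrix n n ℂ)‖) : A = 1 := by
  refine eq_of_norm_le_re_inner_eq_norm_sq (𝕜 := ℂ) hnorm ?_
  have hinner : inner ℂ 1 A = inner ℂ (1 : Matrix n n ℂ) 1 := by
    simpa only [inner, conjTranspose_one, one_mul] using htr
  rw [inner_re_symm, hinner, norm_sq_eq_re_inner (𝕜 := ℂ)]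

variable [DecidableEq m] (φ : Matrix n n ℂ →ₚ[ℂ] Matrix m m ℂ)

theorem frobenius_norm_map_le_of_isHermitian (hone : φ 1 ≤ 1)
    (htr : ∀ A, 0 ≤ A → (φ A).trace ≤ A.trace) {X : Matrix n n ℂ} (hX : X.IsHermitian) :
    ‖φ X‖ ≤ ‖X‖ := by
  have hφX : (φ X).IsHermitian := IsSelfAdjoint.map' hX φ
  rw [frobenius_norm_eq_sqrt_trace, frobenius_norm_eq_sqrt_trace, hφX.eq, hX.eq]
  refine Real.sqrt_le_sqrt (Complex.re_le_re ?_)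
  calc (φ X * φ X).trace ≤ (φ (X * X)).trace := by
        have h : φ X * φ X ≤ φ (X * X) := kadison_inequality φ hone hX
        exact OrderHomClass.mono (tracePositiveLinearMap m ℂ ℂ) h
    _ ≤ (X * X).trace := htr _ (IsSelfAdjoint.mul_self_nonneg hX)

theorem frobenius_norm_map_le (hone : φ 1 ≤ 1) (htr : ∀ A, 0 ≤ A → (φ A).trace ≤ A.trace)
    (A : Matrix n n ℂ) : ‖φ A‖ ≤ ‖A‖ := by
  have hre : IsSelfAdjoint (realPart A : Matrix n n ℂ) := (realPart A).2
  have him : IsSelfAdjoint (imaginaryPart A : Matrix n n ℂ) := (imaginaryPart A).2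
  rw [← sq_le_sq₀ (norm_nonneg _) (norm_nonneg _), ← realPart_add_I_smul_imaginaryPart A, map_add,
    map_smul, norm_sq_add_I_smul (hre.map' φ) (him.map' φ), norm_sq_add_I_smul hre him]
  gcongr
  · exact frobenius_norm_map_le_of_isHermitian φ hone htr hre
  · exact frobenius_norm_map_le_of_isHermitian φ hone htr him

theorem frobenius_norm_map_le_iff_map_one {T : Matrix n n ℂ →ₗ[ℂ] Matrix n n ℂ}
    (hpos : ∀ A : Matrix n n ℂ, A.PosSemidef → (T A).PosSemidef)
    (htp : ∀ A, (T A).trace = A.trace) : (∀ A, ‖T A‖ ≤ ‖A‖) ↔ T 1 = 1 := by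
  let φ : Matrix n n ℂ →ₚ[ℂ] Matrix n n ℂ := .mk₀ T fun A hA ↦ (hpos A hA.posSemidef).nonneg
  exact ⟨fun h ↦ eq_one_of_trace_eq_of_norm_le (htp 1) (h 1),
    fun h ↦ frobenius_norm_map_le φ h.le fun A _ ↦ (htp A).le⟩

theorem stmt_0_general (T : Matrix n n ℂ →ₗ[ℂ] Matrix n n ℂ)
    (hpos : ∀ A : Matrix n n ℂ, A.PosSemidef → (T A).PosSemidef)
    (htp : ∀ A : Matrix n n ℂ, (T A).trace = A.trace) :
    ((∀ A : Matrix n n ℂ, √((T A)ᴴ * T A).trace.re ≤ √(Aᴴ * A).trace.re) ↔ T 1 = 1) ∧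
    (T 1 = 1 ↔
      ∃ (k : ℕ) (p : Fin k → ℝ) (W : Fin k → (Matrix n n ℂ →ₗ[ℂ] Matrix n n ℂ)),
        (∀ i, 0 ≤ p i) ∧ ∑ i, p i = 1 ∧
        (∀ i (A B : Matrix n n ℂ), ((W i A)ᴴ * W i B).trace = (Aᴴ * B).trace) ∧
        (∀ i, Function.Surjective (W i)) ∧
        ∀ A : Matrix n n ℂ, T A = ∑ i, (p i : ℂ) • W i A) := by
  have hcontr := frobenius_norm_map_le_iff_map_one hpos htp
  simp only [← frobenius_norm_eq_sqrt_trace]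
  exact ⟨hcontr, hcontr.symm.trans (norm_map_le_iff_exists_convexCombination_unitary T)⟩

end HilbertSchmidt

/-- A positive trace-preserving linear map on `M_d(ℂ)` is a contraction in the
Hilbert–Schmidt (2→2) norm iff it is unital, and it is unital iff its representation as a
linear operator on Hilbert–Schmidt space is a convex combination of unitaries of that
`d²`-dimensional Hilbert space (i.e. of Hilbert–Schmidt-inner-product-preserving surjective
linear maps). -/
theorem stmt_0 (d : ℕ) (hd : 0 < d)
    (T : Matrix (Fin d) (Fin d) ℂ →ₗ[ℂ] Matrix (Fin d) (Fin d) ℂ)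
    (hpos : ∀ A : Matrix (Fin d) (Fin d) ℂ, A.PosSemidef → (T A).PosSemidef)
    (htp : ∀ A : Matrix (Fin d) (Fin d) ℂ, (T A).trace = A.trace) :
    ((∀ A : Matrix (Fin d) (Fin d) ℂ,
        Real.sqrt (((T A)ᴴ * T A).trace.re) ≤ Real.sqrt ((Aᴴ * A).trace.re)) ↔ T 1 = 1)
    ∧
    (T 1 = 1 ↔
      ∃ (n : ℕ) (p : Fin n → ℝ)
        (W : Fin n → (Matrix (Fin d) (Fin d) ℂ →ₗ[ℂ] Matrix (Fin d) (Fin d) ℂ)),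
        (∀ i, 0 ≤ p i) ∧ ∑ i, p i = 1 ∧
        (∀ i (A B : Matrix (Fin d) (Fin d) ℂ), ((W i A)ᴴ * W i B).trace = (Aᴴ * B).trace) ∧
        (∀ i, Function.Surjective (W i)) ∧
        ∀ A : Matrix (Fin d) (Fin d) ℂ, T A = ∑ i, (p i : ℂ) • W i A) :=
  stmt_0_general T hpos htp
end

section
/- Every unital trace-preserving completely positive map T on M_d(ℂ) is an affine combination of unitary conjugations: there exist real numbers λ_i summing to 1 and unitaries U_i ∈ U(d) such that T(ρ) = Σ_i λ_i U_i ρ U_i† for all ρ. -/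
open Matrix
open scoped ComplexOrder

/-- The action of `id_n ⊗ T` on block matrices: `T` is applied to each `d × d` block. -/
def blockApply (n d : ℕ) (T : Matrix (Fin d) (Fin d) ℂ → Matrix (Fin d) (Fin d) ℂ)
    (M : Matrix (Fin n × Fin d) (Fin n × Fin d) ℂ) :
    Matrix (Fin n × Fin d) (Fin n × Fin d) ℂ :=
  Matrix.of fun p q => T (Matrix.of fun k l => M (p.1, k) (q.1, l)) p.2 q.2

/-- Complete positivity: `id_n ⊗ T` is positive for every `n`. -/
def IsCP (d : ℕ) (T : Matrix (Fin d) (Fin d) ℂ → Matrix (Fin d) (Fin d) ℂ) : Prop :=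
  ∀ (n : ℕ) (M : Matrix (Fin n × Fin d) (Fin n × Fin d) ℂ),
    M.PosSemidef → (blockApply n d T M).PosSemidef

/-
The conjugations by `1 - p + s p`, for a projection `p` and phases `s`, have `ρ ↦ p ρ (1 - p)` in
their complex span. As this span is closed under composition, it also contains `ρ ↦ p ρ q` for
orthogonal projections `p` and `q`, in particular `ρ ↦ eᵢᵢ ρ eⱼⱼ = tr(eⱼᵢ ρ) eᵢⱼ` for `i ≠ j`.
Composing with conjugations on both sides, and using that a unitarily invariant subspace containing
one off-diagonal matrix unit contains all traceless matrices, gives all maps `ρ ↦ tr(A ρ) B` with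
`A` and `B` traceless. For trace-preserving unital `T`, the map `T - 1` has traceless values and
kills `1`, and hence is a sum of such maps. Thus `T` is a complex combination of conjugations. If
`T` moreover commutes with the adjoint, then the coefficients may be replaced by their real parts;
evaluation at `1` shows that these add up to `1`.
-/

section StarAlgebra

variable (A : Type*) [Ring A] [StarRing A] [Algebra ℂ A]

/-- Conjugation `x ↦ u x u⋆` by unitaries, as a representation of the unitary group on the
underlying vector space of a complex star algebra; `Unitary.conjStarAlgAut` as an endomorphism. -/
def unitaryConj : unitary A →* Module.End ℂ A where
  toFun u := (Unitary.conjStarAlgAut ℂ A u).toAlgEquiv.toLinearMap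
  map_one' := by ext; simp
  map_mul' u v := by ext; simp

/-- The complex algebra of linear maps generated by the unitary conjugations; it is also their
linear span, see `mem_unitaryConjAlgebra_iff_mem_span`. -/
def unitaryConjAlgebra : Subalgebra ℂ (Module.End ℂ A) :=
  Algebra.adjoin ℂ (Set.range (unitaryConj A))

variable {A}

@[simp]
theorem unitaryConj_apply (u : unitary A) (x : A) :
    unitaryConj A u x = u * x * star (u : A) :=
  rfl

theorem unitaryConj_mem_unitaryConjAlgebra (u : unitary A) :
    unitaryConj A u ∈ unitaryConjAlgebra A :=
  Algebra.subset_adjoin ⟨u, rfl⟩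

theorem mem_unitaryConjAlgebra_iff_mem_span {T : Module.End ℂ A} :
    T ∈ unitaryConjAlgebra A ↔ T ∈ Submodule.span ℂ (Set.range (unitaryConj A)) := by
  rw [unitaryConjAlgebra, ← Subalgebra.mem_toSubmodule, Algebra.adjoin_eq_span,
    ← MonoidHom.coe_mrange, Submonoid.closure_eq]

theorem apply_mem_of_mem_unitaryConjAlgebra {S : Submodule ℂ A}
    (hS : ∀ u, ∀ x ∈ S, unitaryConj A u x ∈ S) {T : Module.End ℂ A}
    (hT : T ∈ unitaryConjAlgebra A) {x : A} (hx : x ∈ S) : T x ∈ S := by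
  have hle : Submodule.span ℂ (Set.range (unitaryConj A)) ≤ S.compatibleMaps S := by
    rw [Submodule.span_le]
    rintro _ ⟨u, rfl⟩
    exact hS u
  exact hle (mem_unitaryConjAlgebra_iff_mem_span.1 hT) hx

theorem sum_eq_one_of_sum_smul_unitaryConj_map_one [Nontrivial A] {ι : Type*} {s : Finset ι}
    {c : ι → ℝ} {u : ι → unitary A}
    (h : (∑ i ∈ s, (c i : ℂ) • unitaryConj A (u i)) 1 = 1) : ∑ i ∈ s, c i = 1 := by
  have hsum : algebraMap ℂ A (∑ i ∈ s, (c i : ℂ)) = algebraMap ℂ A 1 := by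
    simpa [Algebra.algebraMap_eq_smul_one, Finset.sum_smul] using h
  exact_mod_cast (algebraMap ℂ A).injective hsum

variable [StarModule ℂ A] {p q : A}

theorem one_sub_add_smul_mem_unitary (hp : IsStarProjection p) {s : ℂ} (hs : s ∈ unitary ℂ) :
    1 - p + s • p ∈ unitary A := by
  have hmul (a b : ℂ) : (1 - p + a • p) * (1 - p + b • p) = 1 - p + (a * b) • p := by
    simp [add_mul, mul_add, hp.isIdempotentElem.one_sub.eq, hp.isIdempotentElem.eq,
      hp.mul_one_sub_self, hp.one_sub_mul_self, smul_smul, mul_comm]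
  have hstar : star (1 - p + s • p) = 1 - p + star s • p := by
    simp [hp.isSelfAdjoint.star_eq]
  rw [Unitary.mem_iff, hstar, hmul, hmul, hs.1, hs.2, one_smul, sub_add_cancel]
  exact ⟨rfl, rfl⟩

theorem unitaryConj_one_sub_add_smul (hp : IsStarProjection p) {s : ℂ} (hs : s ∈ unitary ℂ) :
    unitaryConj A ⟨1 - p + s • p, one_sub_add_smul_mem_unitary hp hs⟩ =
      LinearMap.mulLeftRight ℂ (p, p) + LinearMap.mulLeftRight ℂ (1 - p, 1 - p) +
        s • LinearMap.mulLeftRight ℂ (p, 1 - p) +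
        star s • LinearMap.mulLeftRight ℂ (1 - p, p) := by
  have hss : s * star s = 1 := hs.2
  ext x
  simp only [unitaryConj_apply, LinearMap.add_apply, LinearMap.smul_apply,
    LinearMap.mulLeftRight_apply, star_add, star_smul, hp.isSelfAdjoint.star_eq,
    hp.one_sub.isSelfAdjoint.star_eq]
  generalize 1 - p = q
  simp only [add_mul, mul_add, smul_mul_assoc, mul_smul_comm]
  linear_combination (norm := module) hss • (p * x * p)

/- Averaging the conjugations by `1 - p + s p` over the fourth roots of unity `s`, with weights
`star s`, extracts the coefficient of `s`. -/
theorem mulLeftRight_one_sub_mem_unitaryConjAlgebra (hp : IsStarProjection p) :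
    LinearMap.mulLeftRight ℂ (p, 1 - p) ∈ unitaryConjAlgebra A := by
  have hI : Complex.I ∈ unitary ℂ := by simp [Unitary.mem_iff]
  have hneg {s : ℂ} (hs : s ∈ unitary ℂ) : -s ∈ unitary ℂ := (-⟨s, hs⟩ : unitary ℂ).2
  have hphase {s : ℂ} (hs : s ∈ unitary ℂ) : star s •
      (LinearMap.mulLeftRight ℂ (p, p) + LinearMap.mulLeftRight ℂ (1 - p, 1 - p) +
        s • LinearMap.mulLeftRight ℂ (p, 1 - p) +
        star s • LinearMap.mulLeftRight ℂ (1 - p, p)) ∈ unitaryConjAlgebra A :=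
    Subalgebra.smul_mem _
      (unitaryConj_one_sub_add_smul hp hs ▸ unitaryConj_mem_unitaryConjAlgebra _) _
  have hsum := Subalgebra.smul_mem _ (add_mem
    (add_mem (hphase (one_mem _)) (hphase (hneg (one_mem _))))
    (add_mem (hphase hI) (hphase (hneg hI)))) (1 / 4 : ℂ)
  convert hsum using 1
  simp only [star_one, star_neg, Complex.star_def, Complex.conj_I]
  match_scalars <;> ring_nf <;> norm_num

theorem mulLeftRight_mem_unitaryConjAlgebra (hp : IsStarProjection p) (hq : IsStarProjection q)
    (hpq : p * q = 0) : LinearMap.mulLeftRight ℂ (p, q) ∈ unitaryConjAlgebra A := by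
  have hqp : q * p = 0 := by
    simpa [hp.isSelfAdjoint.star_eq, hq.isSelfAdjoint.star_eq] using congr(star $hpq)
  convert mul_mem (mulLeftRight_one_sub_mem_unitaryConjAlgebra hq.one_sub)
    (mulLeftRight_one_sub_mem_unitaryConjAlgebra hp) using 1
  ext x
  have hleft : (1 - q) * p = p := by rw [sub_mul, one_mul, hqp, sub_zero]
  have hright : (1 - p) * q = q := by rw [sub_mul, one_mul, hpq, sub_zero]
  simp only [Module.End.mul_apply, LinearMap.mulLeftRight_apply, sub_sub_cancel]
  rw [← mul_assoc, ← mul_assoc, hleft, mul_assoc _ (1 - p), hright]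

theorem sum_re_smul_eq_of_isSelfAdjoint {M : Type*} [AddCommGroup M] [StarAddMonoid M]
    [Module ℂ M] [StarModule ℂ M] {ι : Type*} {s : Finset ι} {c : ι → ℂ} {y : ι → M}
    (hy : ∀ i ∈ s, IsSelfAdjoint (y i)) (hsum : IsSelfAdjoint (∑ i ∈ s, c i • y i)) :
    ∑ i ∈ s, ((c i).re : ℂ) • y i = ∑ i ∈ s, c i • y i := by
  rw [← hsum.coe_realPart, map_sum, AddSubgroup.val_finsetSum]
  refine Finset.sum_congr rfl fun i hi => ?_
  simp [realPart_smul, (hy i hi).coe_realPart, (hy i hi).imaginaryPart]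

open WithConv in
theorem isSelfAdjoint_toConv_unitaryConj (u : unitary A) :
    IsSelfAdjoint (toConv (unitaryConj A u)) := by
  rw [LinearMap.IntrinsicStar.isSelfAdjoint_iff_map_star]
  exact map_star (Unitary.conjStarAlgAut ℂ A u)

/- In the intrinsic star structure `T⋆ x = (T x⋆)⋆` of `WithConv`, both `T` and the conjugations are
self-adjoint, so that the real parts of complex coefficients suffice. -/
open WithConv in
theorem exists_eq_sum_smul_unitaryConj_of_map_star {T : Module.End ℂ A}
    (hT : T ∈ unitaryConjAlgebra A) (hstar : ∀ x, T (star x) = star (T x)) :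
    ∃ (m : ℕ) (lam : Fin m → ℝ) (u : Fin m → unitary A),
      T = ∑ i, (lam i : ℂ) • unitaryConj A (u i) := by
  obtain ⟨m, c, y, rfl⟩ :=
    Submodule.mem_span_set'.1 (mem_unitaryConjAlgebra_iff_mem_span.1 hT)
  choose u hu using fun i => (y i).2
  refine ⟨m, fun i => (c i).re, u, ?_⟩
  simp only [← hu] at hstar ⊢
  have hsum : IsSelfAdjoint (∑ i, c i • toConv (unitaryConj A (u i))) := by
    rw [LinearMap.IntrinsicStar.isSelfAdjoint_iff_map_star]
    simpa using hstar
  have hre := sum_re_smul_eq_of_isSelfAdjoint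
    (fun i _ => isSelfAdjoint_toConv_unitaryConj (u i)) hsum
  simpa only [ofConv_sum, ofConv_smul, ofConv_toConv] using congr(ofConv $hre.symm)

end StarAlgebra

section TraceSMul

variable {n R : Type*} [Fintype n] [DecidableEq n] [CommRing R]

theorem sum_smul_single_one (B : Matrix n n R) :
    ∑ i, ∑ j, B i j • single i j (1 : R) = B := by
  simpa using (matrix_eq_sum_single B).symm

theorem sum_smul_single_sub_trace_smul {B : Matrix n n R} (hB : B.trace = 0)
    (X : Matrix n n R) :
    ∑ i, ∑ j, B i j • (single i j 1 - (single i j (1 : R)).trace • X) = B := by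
  have htrace : ∑ i, ∑ j, B i j • (single i j (1 : R)).trace = 0 := by
    simpa only [trace_sum, trace_smul, hB] using congr(trace $(sum_smul_single_one B))
  simp only [smul_sub, Finset.sum_sub_distrib, ← smul_assoc, ← Finset.sum_smul, htrace, zero_smul,
    sub_zero, sum_smul_single_one]

theorem mem_of_trace_eq_zero_of_single_mem {S : Submodule R (Matrix n n R)}
    (hoff : ∀ i j, i ≠ j → single i j 1 ∈ S)
    (hdiag : ∀ i j, i ≠ j → single i i 1 - single j j 1 ∈ S)
    {B : Matrix n n R} (hB : B.trace = 0) : B ∈ S := by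
  cases isEmpty_or_nonempty n with
  | inl _ => simp [Subsingleton.elim B 0]
  | inr h =>
    obtain ⟨k⟩ := h
    rw [← sum_smul_single_sub_trace_smul hB (single k k 1)]
    refine S.sum_mem fun i _ => S.sum_mem fun j _ => S.smul_mem _ ?_
    rcases eq_or_ne i j with rfl | hij
    · rcases eq_or_ne i k with rfl | hik
      · simp
      · simpa using hdiag i k hik
    · simpa [trace_single_eq_of_ne _ _ _ hij] using hoff i j hij

variable (n R) in
/-- The rank-one map `ρ ↦ tr(A ρ) B`, bilinearly in `A` and `B`. -/
def traceSMul : Matrix n n R →ₗ[R] Matrix n n R →ₗ[R] Module.End R (Matrix n n R) :=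
  LinearMap.smulRightₗ ∘ₗ (LinearMap.mul R (Matrix n n R)).compr₂ (traceLinearMap n R R)

@[simp]
theorem traceSMul_apply (A B ρ : Matrix n n R) : traceSMul n R A B ρ = (A * ρ).trace • B := by
  simp [traceSMul]

theorem traceSMul_single_single (i j : n) :
    traceSMul n R (single j i 1) (single i j 1) =
      LinearMap.mulLeftRight R (single i i 1, single j j 1) := by
  refine LinearMap.ext fun ρ => ?_
  simp [trace_single_mul]

theorem sum_traceSMul_single (T : Module.End R (Matrix n n R)) :
    ∑ i, ∑ j, traceSMul n R (single j i 1) (T (single i j 1)) = T := by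
  refine LinearMap.ext fun ρ => ?_
  conv_rhs => rw [← sum_smul_single_one ρ]
  simp only [LinearMap.sum_apply, traceSMul_apply, trace_single_mul, map_sum, map_smul,
    one_smul]

theorem sum_traceSMul_single_sub_trace_smul {T : Module.End R (Matrix n n R)} (hT : T 1 = 0)
    (X : Matrix n n R) :
    ∑ i, ∑ j, traceSMul n R (single j i 1 - (single j i (1 : R)).trace • X)
      (T (single i j 1)) = T := by
  have htrace : ∑ i, ∑ j, (single j i (1 : R)).trace • T (single i j 1) = 0 := by
    have hone (i j : n) : (single j i (1 : R)).trace = (1 : Matrix n n R) i j := by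
      rcases eq_or_ne i j with rfl | hij
      · simp
      · simp [hij, trace_single_eq_of_ne _ _ _ hij.symm]
    simpa only [hone, map_sum, map_smul, hT] using
      congr(T $(sum_smul_single_one (1 : Matrix n n R)))
  have hX : ∑ i, ∑ j, traceSMul n R ((single j i (1 : R)).trace • X) (T (single i j 1)) = 0 := by
    simpa only [map_sum, map_smul, LinearMap.smul_apply, map_zero] using
      congr(traceSMul n R X $htrace)
  simp only [map_sub, LinearMap.sub_apply, Finset.sum_sub_distrib, sum_traceSMul_single, hX,
    sub_zero]

end TraceSMul

section ComplexMatrix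

variable {n : Type*} [Fintype n] [DecidableEq n]

theorem unitaryConj_mul_traceSMul (U : unitaryGroup n ℂ) (A B : Matrix n n ℂ) :
    unitaryConj _ U * traceSMul n ℂ A B = traceSMul n ℂ A (unitaryConj _ U B) := by
  refine LinearMap.ext fun ρ => ?_
  simp

theorem traceSMul_mul_unitaryConj (U : unitaryGroup n ℂ) (A B : Matrix n n ℂ) :
    traceSMul n ℂ A B * unitaryConj _ U = traceSMul n ℂ (unitaryConj _ U⁻¹ A) B := by
  refine LinearMap.ext fun ρ => ?_
  have htrace : (A * (U * ρ * star (U : Matrix n n ℂ))).trace =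
      (star (U : Matrix n n ℂ) * A * U * ρ).trace := by
    rw [← mul_assoc, trace_mul_comm]
    simp only [mul_assoc]
  simp [htrace]

theorem permMatrix_mem_unitaryGroup (σ : Equiv.Perm n) :
    σ.permMatrix ℂ ∈ unitaryGroup n ℂ := by
  rw [mem_unitaryGroup_iff, star_eq_conjTranspose, conjTranspose_permMatrix, ← permMatrix_mul,
    inv_mul_cancel, permMatrix_one]

theorem unitaryConj_permMatrix_single (σ : Equiv.Perm n) (i j : n) :
    unitaryConj _ ⟨σ.permMatrix ℂ, permMatrix_mem_unitaryGroup σ⟩ (single (σ i) (σ j) 1) =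
      single i j 1 := by
  rw [unitaryConj_apply, star_eq_conjTranspose, conjTranspose_permMatrix,
    PEquiv.toMatrix_toPEquiv_mul, PEquiv.mul_toMatrix_toPEquiv, submatrix_submatrix]
  simp

theorem isStarProjection_single (i : n) : IsStarProjection (single i i (1 : ℂ)) where
  isIdempotentElem := by simp [IsIdempotentElem]
  isSelfAdjoint := by simp [IsSelfAdjoint, star_eq_conjTranspose, conjTranspose_single]

theorem isStarProjection_half_smul_single_add {i j : n} (hij : i ≠ j) :
    IsStarProjection ((1 / 2 : ℂ) •
      (single i i (1 : ℂ) + single i j 1 + single j i 1 + single j j 1)) where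
  isIdempotentElem := by
    simp only [IsIdempotentElem, smul_mul_assoc, mul_smul_comm, add_mul, mul_add, mul_one,
      single_mul_single_same, single_mul_single_of_ne _ _ _ _ hij,
      single_mul_single_of_ne _ _ _ _ hij.symm]
    module
  isSelfAdjoint := by
    simp only [IsSelfAdjoint, star_eq_conjTranspose, conjTranspose_smul, conjTranspose_add,
      conjTranspose_single, star_one, star_div₀, star_ofNat]
    module

theorem single_mem_of_unitaryConj_mem {S : Submodule ℂ (Matrix n n ℂ)}
    (hS : ∀ U, ∀ B ∈ S, unitaryConj _ U B ∈ S) {i j k l : n} (hij : i ≠ j) (hkl : k ≠ l)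
    (h : single i j (1 : ℂ) ∈ S) : single k l (1 : ℂ) ∈ S := by
  obtain ⟨σ, rfl, rfl⟩ := MulAction.is_two_pretransitive_iff.1
    (Equiv.Perm.isMultiplyPretransitive n 2) hkl hij
  exact unitaryConj_permMatrix_single σ k l ▸ hS _ _ h

/- With `p` the projection onto the line of `eᵢ + eⱼ`, the matrix `p eᵢⱼ (1 - p)` equals
`(eⱼⱼ - eᵢᵢ + eᵢⱼ - eⱼᵢ) / 4`. -/
theorem single_sub_single_mem_of_unitaryConj_mem {S : Submodule ℂ (Matrix n n ℂ)}
    (hS : ∀ U, ∀ B ∈ S, unitaryConj _ U B ∈ S) {i j : n} (hij : i ≠ j)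
    (h : single i j (1 : ℂ) ∈ S) : single i i 1 - single j j 1 ∈ S := by
  have hp := isStarProjection_half_smul_single_add hij
  have hcorner := apply_mem_of_mem_unitaryConjAlgebra hS
    (mulLeftRight_one_sub_mem_unitaryConjAlgebra hp) h
  have hsum := S.add_mem (S.smul_mem (-4) hcorner)
    (S.sub_mem h (single_mem_of_unitaryConj_mem hS hij hij.symm h))
  convert hsum using 1
  simp only [LinearMap.mulLeftRight_apply, smul_mul_assoc, mul_smul_comm, add_mul, mul_add,
    mul_sub, mul_one, zero_mul, single_mul_single_same,
    single_mul_single_of_ne _ _ _ _ hij.symm]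
  module

theorem mem_of_trace_eq_zero_of_unitaryConj_mem {S : Submodule ℂ (Matrix n n ℂ)}
    (hS : ∀ U, ∀ B ∈ S, unitaryConj _ U B ∈ S) {i j : n} (hij : i ≠ j)
    (h : single i j (1 : ℂ) ∈ S) {B : Matrix n n ℂ} (hB : B.trace = 0) : B ∈ S :=
  have hoff {k l : n} (hkl : k ≠ l) : single k l (1 : ℂ) ∈ S :=
    single_mem_of_unitaryConj_mem hS hij hkl h
  mem_of_trace_eq_zero_of_single_mem (fun _ _ => hoff)
    (fun _ _ hkl => single_sub_single_mem_of_unitaryConj_mem hS hkl (hoff hkl)) hB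

theorem traceSMul_single_single_mem_unitaryConjAlgebra {i j : n} (hij : i ≠ j) :
    traceSMul n ℂ (single j i 1) (single i j 1) ∈ unitaryConjAlgebra (Matrix n n ℂ) := by
  rw [traceSMul_single_single]
  exact mulLeftRight_mem_unitaryConjAlgebra (isStarProjection_single i) (isStarProjection_single j)
    (single_mul_single_of_ne _ _ _ _ hij _)

theorem traceSMul_mem_unitaryConjAlgebra {A B : Matrix n n ℂ} (hA : A.trace = 0)
    (hB : B.trace = 0) : traceSMul n ℂ A B ∈ unitaryConjAlgebra (Matrix n n ℂ) := by
  cases subsingleton_or_nontrivial n with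
  | inl _ =>
    have hA0 : A = 0 := by
      ext i j
      rw [Subsingleton.elim j i]
      rwa [Matrix.trace, Fintype.sum_subsingleton _ i] at hA
    simp [hA0]
  | inr _ =>
    obtain ⟨i, j, hij⟩ := exists_pair_ne n
    let V := Subalgebra.toSubmodule (unitaryConjAlgebra (Matrix n n ℂ))
    have hAij : A ∈ V.comap ((traceSMul n ℂ).flip (single i j 1)) := by
      refine mem_of_trace_eq_zero_of_unitaryConj_mem (fun U C hC => ?_) hij.symm
        (traceSMul_single_single_mem_unitaryConjAlgebra hij) hA
      have hCU := (unitaryConjAlgebra (Matrix n n ℂ)).mul_mem hC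
        (unitaryConj_mem_unitaryConjAlgebra U⁻¹)
      rwa [LinearMap.flip_apply, traceSMul_mul_unitaryConj, inv_inv] at hCU
    refine mem_of_trace_eq_zero_of_unitaryConj_mem (S := V.comap (traceSMul n ℂ A))
      (fun U C hC => ?_) hij hAij hB
    have hUC := mul_mem (unitaryConj_mem_unitaryConjAlgebra U) hC
    rwa [unitaryConj_mul_traceSMul] at hUC

theorem mem_unitaryConjAlgebra_of_trace_of_map_one {T : Module.End ℂ (Matrix n n ℂ)}
    (htrace : ∀ A, (T A).trace = A.trace) (hone : T 1 = 1) :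
    T ∈ unitaryConjAlgebra (Matrix n n ℂ) := by
  suffices hsub : T - 1 ∈ unitaryConjAlgebra (Matrix n n ℂ) by
    simpa using add_mem hsub (one_mem _)
  have hsub_one : (T - 1) 1 = 0 := by simp [hone]
  have hsub_trace (A : Matrix n n ℂ) : ((T - 1) A).trace = 0 := by simp [htrace]
  rw [← sum_traceSMul_single_sub_trace_smul hsub_one ((Fintype.card n : ℂ)⁻¹ • 1)]
  refine sum_mem fun i _ => sum_mem fun j _ =>
    traceSMul_mem_unitaryConjAlgebra ?_ (hsub_trace _)
  have : Nonempty n := ⟨i⟩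
  have hcard : (Fintype.card n : ℂ) ≠ 0 := Nat.cast_ne_zero.2 Fintype.card_ne_zero
  simp [hcard]

end ComplexMatrix

open scoped MatrixOrder in
theorem IsCP.map_conjTranspose {d : ℕ}
    {T : Matrix (Fin d) (Fin d) ℂ →ₗ[ℂ] Matrix (Fin d) (Fin d) ℂ} (hT : IsCP d T)
    (A : Matrix (Fin d) (Fin d) ℂ) : T Aᴴ = (T A)ᴴ := by
  have hpos (B : Matrix (Fin d) (Fin d) ℂ) (hB : 0 ≤ B) : 0 ≤ T B := by
    have hblock := hT 1 (B.submatrix Prod.snd Prod.snd) (hB.posSemidef.submatrix _)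
    exact (hblock.submatrix fun i => (0, i)).nonneg
  exact map_star (PositiveLinearMap.mk₀ T hpos) A

theorem stmt_2_general {n : Type*} [Fintype n] [DecidableEq n]
    (T : Matrix n n ℂ →ₗ[ℂ] Matrix n n ℂ) (hstar : ∀ A, T Aᴴ = (T A)ᴴ)
    (htp : ∀ A : Matrix n n ℂ, (T A).trace = A.trace) (hu : T 1 = 1) :
    ∃ (m : ℕ) (lam : Fin m → ℝ) (U : Fin m → Matrix n n ℂ),
      ∑ i, lam i = 1 ∧ (∀ i, U i ∈ unitaryGroup n ℂ) ∧
      ∀ ρ : Matrix n n ℂ, T ρ = ∑ i, (lam i : ℂ) • (U i * ρ * (U i)ᴴ) := by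
  cases isEmpty_or_nonempty n with
  | inl _ => exact ⟨1, fun _ => 1, fun _ => 1, by simp, fun _ => one_mem _,
      fun _ => Subsingleton.elim _ _⟩
  | inr _ =>
    obtain ⟨m, lam, U, rfl⟩ := exists_eq_sum_smul_unitaryConj_of_map_star
      (mem_unitaryConjAlgebra_of_trace_of_map_one htp hu) hstar
    refine ⟨m, lam, fun i => U i, sum_eq_one_of_sum_smul_unitaryConj_map_one hu,
      fun i => (U i).2, fun ρ => ?_⟩
    simp [star_eq_conjTranspose]

/-- Every unital trace-preserving completely positive map on `M_d(ℂ)` is an affine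
combination of unitary conjugations. -/
theorem stmt_2 (d : ℕ) (hd : 0 < d)
    (T : Matrix (Fin d) (Fin d) ℂ →ₗ[ℂ] Matrix (Fin d) (Fin d) ℂ)
    (hcp : IsCP d T) (htp : ∀ A : Matrix (Fin d) (Fin d) ℂ, (T A).trace = A.trace)
    (hu : T 1 = 1) :
    ∃ (n : ℕ) (lam : Fin n → ℝ) (U : Fin n → Matrix (Fin d) (Fin d) ℂ),
      ∑ i, lam i = 1 ∧ (∀ i, U i ∈ Matrix.unitaryGroup (Fin d) ℂ) ∧
      ∀ ρ : Matrix (Fin d) (Fin d) ℂ, T ρ = ∑ i, (lam i : ℂ) • (U i * ρ * (U i)ᴴ) := by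
  exact stmt_2_general T hcp.map_conjTranspose htp hu
end

section
/- For integers d ≥ 1 and nonnegative reals σ₁ ≥ … ≥ σ_d, the minimum of tr[AĀ] over all A ∈ M_d(ℂ) with singular values σ₁,…,σ_d equals -2Σ_{i=1}^{d/2} σ_{2i-1}σ_{2i} if d is even, and -2Σ_{i=1}^{(d-1)/2} σ_{2i-1}σ_{2i} + σ_d² if d is odd. -/
open Matrix
open scoped ComplexOrder

/-- The singular values of a square complex matrix (in some order): the square roots of the
eigenvalues of `Aᴴ * A`. -/
noncomputable def singVals {d : ℕ} (A : Matrix (Fin d) (Fin d) ℂ) : Fin d → ℝ :=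
  fun i =>
    Real.sqrt ((Matrix.posSemidef_conjTranspose_mul_self A).isHermitian.eigenvalues i)

/-!
Writing `A = U diag(σ) Vᴴ`, the real part of `tr[A Ā]` becomes `∑ᵢⱼ σᵢ σⱼ Re(Wᵢⱼ conj Wⱼᵢ)` with
`W = Vᴴ Ū`, which ranges over all unitary matrices. Abel summation in both indices reduces a lower
bound to bounds on the sums of `Re(Wᵢⱼ conj Wⱼᵢ)` over the rectangles `i ≤ k`, `j ≤ l`. Such a sum
is at least `-(min k l + 1)`, because the rows and columns of `W` are unit vectors. On a square of
odd size `n` one gains `1`: the skew part of the corner `B` of `W` is a singular contraction, so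
its squared Frobenius norm is at most `n - 1`, and averaging the resulting bound `‖B‖² - 2(n - 1)`
with the trivial bound `-‖B‖²` gives `-(n - 1)`; for `B = W`, where `‖W‖² = n`, it is even
`2 - n`. A direct sum of blocks `!![0, -1; 1, 0]`, completed by a `1` in odd dimension, attains all
these bounds at once.
-/

section Summation

open Finset

theorem sum_range_two_mul {M : Type*} [AddCommMonoid M] (f : ℕ → M) (n : ℕ) :
    ∑ i ∈ range (2 * n), f i = ∑ i ∈ range n, (f (2 * i) + f (2 * i + 1)) := by
  induction n with
  | zero => simp
  | succ n ih => rw [mul_add_one, sum_range_succ, sum_range_succ, ih, sum_range_succ, add_assoc]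

variable {ι κ R : Type*} [LinearOrder ι] [LinearOrder κ] [CommRing R] [LinearOrder R]
  [IsStrictOrderedRing R]

theorem sum_mul_nonneg_of_antitoneOn {s : Finset ι} {τ a : ι → R} (hτ : AntitoneOn τ s)
    (hτ₀ : ∀ i ∈ s, 0 ≤ τ i) (ha : ∀ k ∈ s, 0 ≤ ∑ i ∈ s with i ≤ k, a i) :
    0 ≤ ∑ i ∈ s, τ i * a i := by
  induction s using Finset.induction_on_max generalizing τ with
  | empty => simp
  | insert m s hmax ih =>
    have hm : m ∉ s := fun h => (hmax m h).false
    have hfilter_m : {i ∈ insert m s | i ≤ m} = insert m s :=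
      filter_true_of_mem fun i hi =>
        (mem_insert.1 hi).elim (fun h => h.le) fun h => (hmax i h).le
    have hfilter {k : ι} (hk : k ∈ s) : {i ∈ insert m s | i ≤ k} = {i ∈ s | i ≤ k} := by
      rw [filter_insert, if_neg (hmax k hk).not_ge]
    have hlast : 0 ≤ τ m * ∑ i ∈ insert m s, a i :=
      mul_nonneg (hτ₀ m (mem_insert_self m s)) (hfilter_m ▸ ha m (mem_insert_self m s))
    have hrest : 0 ≤ ∑ i ∈ s, (τ i - τ m) * a i := by
      refine ih (fun i hi j hj hij => ?_) (fun i hi => ?_) fun k hk => ?_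
      · exact sub_le_sub_right
          (hτ (mem_insert_of_mem hi) (mem_insert_of_mem hj) hij) _
      · exact sub_nonneg.2
          (hτ (mem_insert_of_mem hi) (mem_insert_self m s) (hmax i hi).le)
      · exact hfilter hk ▸ ha k (mem_insert_of_mem hk)
    calc 0 ≤ ∑ i ∈ s, (τ i - τ m) * a i + τ m * ∑ i ∈ insert m s, a i := add_nonneg hrest hlast
      _ = ∑ i ∈ insert m s, τ i * a i := by
        simp only [sum_insert hm, sub_mul, sum_sub_distrib, ← mul_sum]
        ring

theorem sum_sum_mul_nonneg_of_antitoneOn {s : Finset ι} {t : Finset κ} {τ : ι → R} {υ : κ → R}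
    {a : ι → κ → R} (hτ : AntitoneOn τ s) (hτ₀ : ∀ i ∈ s, 0 ≤ τ i)
    (hυ : AntitoneOn υ t) (hυ₀ : ∀ j ∈ t, 0 ≤ υ j)
    (ha : ∀ k ∈ s, ∀ l ∈ t, 0 ≤ ∑ i ∈ s with i ≤ k, ∑ j ∈ t with j ≤ l, a i j) :
    0 ≤ ∑ i ∈ s, ∑ j ∈ t, τ i * υ j * a i j := by
  simp only [mul_assoc, ← mul_sum]
  refine sum_mul_nonneg_of_antitoneOn hτ hτ₀ fun k hk => ?_
  rw [sum_comm]
  simp only [← mul_sum]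
  refine sum_mul_nonneg_of_antitoneOn hυ hυ₀ fun l hl => ?_
  rw [sum_comm]
  exact ha k hk l hl

end Summation

section SingularValues

variable {ι n 𝕜 E : Type*} [Fintype ι] [Fintype n] [DecidableEq n] [RCLike 𝕜]

theorem exists_perm_comp_eq_of_map_univ_eq {α : Type*} {f g : ι → α}
    (h : Finset.univ.val.map f = Finset.univ.val.map g) : ∃ e : Equiv.Perm ι, f ∘ e = g := by
  classical
  have hfiber (c : α) : Nonempty ({i // g i = c} ≃ {i // f i = c}) := by
    refine ⟨Fintype.equivOfCardEq ?_⟩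
    have hcount := congrArg (Multiset.count c) h
    simp only [Multiset.count_map, eq_comm (a := c)] at hcount
    rw [Fintype.card_subtype, Fintype.card_subtype]
    exact hcount.symm
  exact ⟨Equiv.ofFiberEquiv fun c => (hfiber c).some, funext fun i => Equiv.ofFiberEquiv_map _ i⟩

theorem exists_perm_eigenvalues_eq {H V : Matrix n n 𝕜} (hH : H.IsHermitian)
    (hV : V ∈ unitaryGroup n 𝕜) {μ : n → ℝ} (h : H = V * diagonal (fun i => (μ i : 𝕜)) * Vᴴ) :
    ∃ e : Equiv.Perm n, ∀ i, hH.eigenvalues (e i) = μ i := by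
  have hVV : Vᴴ * V = 1 := mem_unitaryGroup_iff'.1 hV
  have hroots : H.charpoly.roots = Finset.univ.val.map fun i => (μ i : 𝕜) := by
    rw [h, mul_assoc, charpoly_mul_comm, mul_assoc, hVV, mul_one, charpoly_diagonal,
      Polynomial.roots_prod _ _ (Finset.prod_ne_zero_iff.2 fun i _ => Polynomial.X_sub_C_ne_zero _)]
    simp only [Polynomial.roots_X_sub_C, Multiset.bind_singleton]
  obtain ⟨e, he⟩ := exists_perm_comp_eq_of_map_univ_eq
    (hH.roots_charpoly_eq_eigenvalues.symm.trans hroots)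
  exact ⟨e, fun i => RCLike.ofReal_injective (congrFun he i)⟩

theorem exists_orthonormalBasis_norm_smul_eq [NormedAddCommGroup E] [InnerProductSpace 𝕜 E]
    [FiniteDimensional 𝕜 E] (hcard : Module.finrank 𝕜 E = Fintype.card ι) {v : ι → E}
    (hv : Pairwise fun i j => inner 𝕜 (v i) (v j) = 0) :
    ∃ b : OrthonormalBasis ι 𝕜 E, ∀ i, (‖v i‖ : 𝕜) • b i = v i := by
  have hon : Orthonormal 𝕜 ({i | v i ≠ 0}.domRestrict fun i => (‖v i‖⁻¹ : 𝕜) • v i) := by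
    refine ⟨fun i => norm_smul_inv_norm i.2, fun i j hij => ?_⟩
    simp [inner_smul_left, inner_smul_right, hv (Subtype.coe_ne_coe.2 hij)]
  obtain ⟨b, hb⟩ := hon.exists_orthonormalBasis_extension_of_card_eq hcard
  refine ⟨b, fun i => ?_⟩
  by_cases hi : v i = 0
  · simp [hi]
  · rw [hb i hi, smul_inv_smul₀ (by simpa using hi)]

theorem exists_unitary_mul_diagonal_eq {B : Matrix n n 𝕜} {τ : n → ℝ} (hτ : ∀ i, 0 ≤ τ i)
    (hB : Bᴴ * B = diagonal fun i => ((τ i ^ 2 : ℝ) : 𝕜)) :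
    ∃ U ∈ unitaryGroup n 𝕜, B = U * diagonal fun i => (τ i : 𝕜) := by
  set v : n → EuclideanSpace 𝕜 n := fun j => WithLp.toLp 2 (Bᵀ j) with hv
  have hinner (i j : n) : inner 𝕜 (v i) (v j) = (Bᴴ * B) i j := by
    simp [hv, EuclideanSpace.inner_toLp_toLp, mul_apply, dotProduct, mul_comm]
  have hnorm (i : n) : ‖v i‖ = τ i := by
    rw [← sq_eq_sq₀ (norm_nonneg _) (hτ i), ← RCLike.ofReal_inj (K := 𝕜), RCLike.ofReal_pow,
      ← inner_self_eq_norm_sq_to_K, hinner, hB, diagonal_apply_eq]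
  obtain ⟨b, hb⟩ := exists_orthonormalBasis_norm_smul_eq (𝕜 := 𝕜) (by simp) (v := v)
    fun i j hij => (hinner i j).trans (by rw [hB, diagonal_apply_ne _ hij])
  refine ⟨_, (EuclideanSpace.basisFun n 𝕜).toMatrix_orthonormalBasis_mem_unitary b, ?_⟩
  ext i j
  have hij := congrArg (fun x : EuclideanSpace 𝕜 n => x i) (hb j)
  rw [hnorm] at hij
  simpa [hv, Module.Basis.toMatrix_apply, RCLike.real_smul_eq_coe_mul, mul_comm] using hij.symm

variable {d : ℕ} {A : Matrix (Fin d) (Fin d) ℂ} {τ : Fin d → ℝ}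

theorem exists_unitary_mul_diagonal_singVals (A : Matrix (Fin d) (Fin d) ℂ) :
    ∃ U ∈ unitaryGroup (Fin d) ℂ, ∃ V ∈ unitaryGroup (Fin d) ℂ,
      A = U * diagonal (fun i => (singVals A i : ℂ)) * Vᴴ := by
  have hpos := posSemidef_conjTranspose_mul_self A
  set V : Matrix (Fin d) (Fin d) ℂ := ↑hpos.isHermitian.eigenvectorUnitary
  have hV : V ∈ unitaryGroup (Fin d) ℂ := hpos.isHermitian.eigenvectorUnitary.2
  have hdiag : (A * V)ᴴ * (A * V) = diagonal fun i => ((singVals A i ^ 2 : ℝ) : ℂ) := by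
    have hspec := hpos.isHermitian.conjStarAlgAut_star_eigenvectorUnitary
    rw [Unitary.conjStarAlgAut_star_apply] at hspec
    simp only [singVals, Real.sq_sqrt (hpos.eigenvalues_nonneg _)]
    rw [conjTranspose_mul, mul_assoc, ← mul_assoc Aᴴ, ← mul_assoc]
    exact hspec
  obtain ⟨U, hU, hAV : A * V = U * diagonal fun i => (singVals A i : ℂ)⟩ :=
    exists_unitary_mul_diagonal_eq (fun i => Real.sqrt_nonneg _) hdiag
  have hVV : V * Vᴴ = 1 := mem_unitaryGroup_iff.1 hV
  exact ⟨U, hU, V, hV, by rw [← hAV, mul_assoc, hVV, mul_one]⟩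

theorem submatrix_id_perm_mem_unitaryGroup {U : Matrix n n 𝕜} (hU : U ∈ unitaryGroup n 𝕜)
    (e : Equiv.Perm n) : U.submatrix id e ∈ unitaryGroup n 𝕜 := by
  rw [mem_unitaryGroup_iff, star_eq_conjTranspose, conjTranspose_submatrix, submatrix_mul_equiv,
    ← star_eq_conjTranspose, mem_unitaryGroup_iff.1 hU, submatrix_id_id]

theorem exists_perm_singVals_eq_iff (hτ : ∀ i, 0 ≤ τ i) :
    (∃ e : Equiv.Perm (Fin d), ∀ i, singVals A (e i) = τ i) ↔
      ∃ U ∈ unitaryGroup (Fin d) ℂ, ∃ V ∈ unitaryGroup (Fin d) ℂ,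
        A = U * diagonal (fun i => (τ i : ℂ)) * Vᴴ := by
  constructor
  · rintro ⟨e, he⟩
    obtain ⟨U, hU, V, hV, hA⟩ := exists_unitary_mul_diagonal_singVals A
    refine ⟨_, submatrix_id_perm_mem_unitaryGroup hU e, _,
      submatrix_id_perm_mem_unitaryGroup hV e, ?_⟩
    have hD : diagonal (fun i => (τ i : ℂ)) =
        (diagonal fun i => (singVals A i : ℂ)).submatrix e e := by
      rw [submatrix_diagonal_equiv]
      simp only [Function.comp_def, he]
    rw [hD, conjTranspose_submatrix, submatrix_mul_equiv, submatrix_mul_equiv, ← hA,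
      submatrix_id_id]
  · rintro ⟨U, hU, V, hV, rfl⟩
    set D : Matrix (Fin d) (Fin d) ℂ := diagonal fun i => (τ i : ℂ) with hD
    have hUU : Uᴴ * U = 1 := mem_unitaryGroup_iff'.1 hU
    have hDD : Dᴴ * D = diagonal fun i => ((τ i ^ 2 : ℝ) : ℂ) := by simp [hD, pow_two]
    have hAA : (U * D * Vᴴ)ᴴ * (U * D * Vᴴ) =
        V * diagonal (fun i => ((τ i ^ 2 : ℝ) : ℂ)) * Vᴴ := by
      calc (U * D * Vᴴ)ᴴ * (U * D * Vᴴ) = V * (Dᴴ * (Uᴴ * U) * D) * Vᴴ := by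
            simp only [conjTranspose_mul, conjTranspose_conjTranspose, mul_assoc]
        _ = V * diagonal (fun i => ((τ i ^ 2 : ℝ) : ℂ)) * Vᴴ := by rw [hUU, mul_one, hDD]
    obtain ⟨e, he⟩ := exists_perm_eigenvalues_eq (𝕜 := ℂ)
      (posSemidef_conjTranspose_mul_self (U * D * Vᴴ)).isHermitian hV hAA
    exact ⟨e, fun i => (congrArg Real.sqrt (he i)).trans (Real.sqrt_sq (hτ i))⟩

end SingularValues

section Contraction

open scoped Matrix.Norms.L2Operator MatrixOrder

variable {k l m n 𝕜 : Type*} [Fintype k] [Fintype l] [Fintype m] [Fintype n] [RCLike 𝕜]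

theorem trace_conjTranspose_mul_self_eq_sum_norm_sq (M : Matrix m n 𝕜) :
    (Mᴴ * M).trace = ((∑ i, ∑ j, ‖M i j‖ ^ 2 : ℝ) : 𝕜) := by
  rw [Finset.sum_comm]
  simp [trace, mul_apply, RCLike.conj_mul]

theorem le_re_trace_of_mulVec_eq_smul {P : Matrix n n 𝕜} (hP : P.PosSemidef) {x : n → 𝕜}
    (hx : x ≠ 0) {c : ℝ} (hPx : P *ᵥ x = (c : 𝕜) • x) : c ≤ RCLike.re P.trace := by
  classical
  have hvec : Module.End.HasEigenvector (toLin' P) (c : 𝕜) x :=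
    ⟨Module.End.mem_eigenspace_iff.2 (by rwa [toLin'_apply]), hx⟩
  have hspec : c ∈ spectrum ℝ P := by
    rw [← spectrum.algebraMap_mem_iff 𝕜, ← spectrum_toLin']
    exact (Module.End.hasEigenvalue_of_hasEigenvector hvec).mem_spectrum
  rw [hP.isHermitian.spectrum_real_eq_range_eigenvalues] at hspec
  obtain ⟨i, rfl⟩ := hspec
  rw [hP.isHermitian.trace_eq_sum_eigenvalues, ← RCLike.ofReal_sum, RCLike.ofReal_re]
  exact Finset.single_le_sum (fun j _ => hP.eigenvalues_nonneg j) (Finset.mem_univ i)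

variable [DecidableEq n]

theorem l2_opNorm_le_one_of_conjTranspose_mul_self_eq_one {E : Matrix m n 𝕜} (hE : Eᴴ * E = 1) :
    ‖E‖ ≤ 1 := by
  have hone : ‖(1 : Matrix n n 𝕜)‖ ≤ 1 := by
    rw [← diagonal_one, l2_opNorm_diagonal]
    exact (pi_norm_le_iff_of_nonneg zero_le_one).2 fun i => by simp
  rw [← hE, l2_opNorm_conjTranspose_mul_self] at hone
  exact abs_le_one_iff_mul_self_le_one.2 hone |> (le_abs_self _).trans

theorem l2_opNorm_one_submatrix_le [DecidableEq k] [DecidableEq m] {f : k → m}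
    (hf : Function.Injective f) :
    ‖(1 : Matrix m m 𝕜).submatrix id f‖ ≤ 1 := by
  refine l2_opNorm_le_one_of_conjTranspose_mul_self_eq_one ?_
  ext i j
  simp [mul_apply, one_apply, hf.eq_iff]

theorem l2_opNorm_submatrix_le [DecidableEq l] (A : Matrix m n 𝕜) {f : k → m} {g : l → n}
    (hf : Function.Injective f) (hg : Function.Injective g) : ‖A.submatrix f g‖ ≤ ‖A‖ := by
  classical
  set F := (1 : Matrix m m 𝕜).submatrix id f
  set G := (1 : Matrix n n 𝕜).submatrix id g
  have hFG : A.submatrix f g = Fᴴ * (A * G) := by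
    ext i j
    simp [F, G, mul_apply, one_apply]
  calc ‖A.submatrix f g‖ ≤ ‖Fᴴ‖ * (‖A‖ * ‖G‖) := by
        rw [hFG]
        exact (l2_opNorm_mul _ _).trans (by gcongr; exact l2_opNorm_mul _ _)
    _ ≤ 1 * (‖A‖ * 1) := by
        rw [l2_opNorm_conjTranspose]
        gcongr
        exacts [l2_opNorm_one_submatrix_le hf, l2_opNorm_one_submatrix_le hg]
    _ = ‖A‖ := by rw [one_mul, mul_one]

theorem det_eq_zero_of_transpose_eq_neg {R : Type*} [CommRing R] [IsAddTorsionFree R]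
    {M : Matrix n n R} (hM : Mᵀ = -M) (hn : Odd (Fintype.card n)) : M.det = 0 := by
  rw [← self_eq_neg]
  calc M.det = (-M).det := by rw [← hM, det_transpose]
    _ = -M.det := by rw [det_neg, hn.neg_one_pow, neg_one_mul]

theorem posSemidef_one_sub_conjTranspose_mul_self {K : Matrix n n ℂ} (hK : ‖K‖ ≤ 1) :
    (1 - Kᴴ * K).PosSemidef := by
  rw [← Matrix.le_iff]
  calc Kᴴ * K ≤ algebraMap ℝ _ (‖K‖ ^ 2) := CStarAlgebra.star_mul_le_algebraMap_norm_sq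
    _ ≤ algebraMap ℝ _ 1 := algebraMap_mono _ (pow_le_one₀ (norm_nonneg _) hK)
    _ = 1 := map_one _

theorem sum_norm_sq_le_card_sub_one {K : Matrix n n ℂ} (hK : ‖K‖ ≤ 1) (hdet : K.det = 0) :
    ∑ i, ∑ j, ‖K i j‖ ^ 2 ≤ (Fintype.card n : ℝ) - 1 := by
  obtain ⟨x, hx, hKx⟩ := exists_mulVec_eq_zero_iff.2 hdet
  have hfix : (1 - Kᴴ * K) *ᵥ x = ((1 : ℝ) : ℂ) • x := by
    rw [sub_mulVec, ← mulVec_mulVec, hKx]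
    simp
  have htrace : 1 ≤ RCLike.re (1 - Kᴴ * K).trace :=
    le_re_trace_of_mulVec_eq_smul (posSemidef_one_sub_conjTranspose_mul_self hK) hx hfix
  rw [trace_sub, trace_one, trace_conjTranspose_mul_self_eq_sum_norm_sq, map_sub,
    RCLike.ofReal_re, RCLike.natCast_re] at htrace
  linarith

theorem l2_opNorm_transpose_le [DecidableEq m] (A : Matrix m n 𝕜) : ‖Aᵀ‖ ≤ ‖A‖ := by
  refine ContinuousLinearMap.opNorm_le_bound _ (norm_nonneg _) fun x => ?_
  have h := l2_opNorm_mulVec Aᴴ (WithLp.toLp 2 (star x.ofLp))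
  rw [l2_opNorm_conjTranspose] at h
  simpa [EuclideanSpace.norm_eq, mulVec, dotProduct, toLpLin_apply, ← map_mul, ← map_sum] using h

theorem sum_norm_sub_transpose_sq_le {B : Matrix n n ℂ} (hB : ‖B‖ ≤ 1)
    (hn : Odd (Fintype.card n)) :
    ∑ i, ∑ j, ‖B i j - B j i‖ ^ 2 ≤ 4 * ((Fintype.card n : ℝ) - 1) := by
  have hnorm : ‖(2⁻¹ : ℂ) • (B - Bᵀ)‖ ≤ 1 := by
    rw [norm_smul, norm_inv, Complex.norm_ofNat]
    linarith [norm_sub_le B Bᵀ, l2_opNorm_transpose_le B]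
  have hskew : ((2⁻¹ : ℂ) • (B - Bᵀ))ᵀ = -((2⁻¹ : ℂ) • (B - Bᵀ)) := by
    rw [transpose_smul, transpose_sub, transpose_transpose, ← smul_neg, neg_sub]
  have h := sum_norm_sq_le_card_sub_one hnorm (det_eq_zero_of_transpose_eq_neg hskew hn)
  simp only [Matrix.smul_apply, Matrix.sub_apply, transpose_apply, smul_eq_mul, norm_mul, norm_inv,
    Complex.norm_ofNat, mul_pow, ← Finset.mul_sum] at h
  linarith

end Contraction

section Overlap

open Finset

variable {n : Type*}

/-- The real part of `W i j * conj (W j i)`: a symmetric kernel whose entries sum to the real part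
of the trace of `W` times its entrywise conjugate. -/
def transposeOverlap (W : Matrix n n ℂ) (i j : n) : ℝ := (W i j * star (W j i)).re

theorem transposeOverlap_comm (W : Matrix n n ℂ) (i j : n) :
    transposeOverlap W i j = transposeOverlap W j i := by
  simp only [transposeOverlap, Complex.star_def, Complex.mul_re, Complex.conj_re, Complex.conj_im]
  ring

theorem two_mul_transposeOverlap_eq (W : Matrix n n ℂ) (i j : n) :
    2 * transposeOverlap W i j = ‖W i j‖ ^ 2 + ‖W j i‖ ^ 2 - ‖W i j - W j i‖ ^ 2 := by
  simp only [← Complex.normSq_eq_norm_sq, Complex.normSq_sub, transposeOverlap, Complex.star_def]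
  ring

theorem neg_le_two_mul_transposeOverlap (W : Matrix n n ℂ) (i j : n) :
    -(‖W i j‖ ^ 2 + ‖W j i‖ ^ 2) ≤ 2 * transposeOverlap W i j := by
  have h := Complex.normSq_nonneg (W i j + W j i)
  rw [Complex.normSq_add, Complex.normSq_eq_norm_sq, Complex.normSq_eq_norm_sq] at h
  rw [transposeOverlap, Complex.star_def]
  linarith

variable [Fintype n]

theorem two_mul_sum_transposeOverlap_eq (W : Matrix n n ℂ) :
    2 * ∑ i, ∑ j, transposeOverlap W i j =
      2 * ∑ i, ∑ j, ‖W i j‖ ^ 2 - ∑ i, ∑ j, ‖W i j - W j i‖ ^ 2 := by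
  simp only [mul_sum, two_mul_transposeOverlap_eq, sum_sub_distrib, sum_add_distrib]
  rw [sum_comm (f := fun i j => ‖W j i‖ ^ 2)]
  simp only [← mul_sum]
  ring

theorem neg_sum_norm_sq_le_sum_transposeOverlap (W : Matrix n n ℂ) :
    -∑ i, ∑ j, ‖W i j‖ ^ 2 ≤ ∑ i, ∑ j, transposeOverlap W i j := by
  have h : ∑ i, ∑ j, -(‖W i j‖ ^ 2 + ‖W j i‖ ^ 2) ≤ ∑ i, ∑ j, 2 * transposeOverlap W i j :=
    sum_le_sum fun i _ => sum_le_sum fun j _ => neg_le_two_mul_transposeOverlap W i j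
  simp only [sum_neg_distrib, sum_add_distrib, ← mul_sum] at h
  rw [sum_comm (f := fun i j => ‖W j i‖ ^ 2)] at h
  linarith

variable [DecidableEq n] {W : Matrix n n ℂ} {s t : Finset n}

open scoped Matrix.Norms.L2Operator

theorem neg_card_sub_one_le_sum_transposeOverlap {B : Matrix n n ℂ} (hB : ‖B‖ ≤ 1)
    (hn : Odd (Fintype.card n)) :
    -((Fintype.card n : ℝ) - 1) ≤ ∑ i, ∑ j, transposeOverlap B i j := by
  linarith [two_mul_sum_transposeOverlap_eq B, neg_sum_norm_sq_le_sum_transposeOverlap B,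
    sum_norm_sub_transpose_sq_le hB hn]

theorem norm_le_one_of_mem_unitaryGroup (hW : W ∈ unitaryGroup n ℂ) : ‖W‖ ≤ 1 :=
  l2_opNorm_le_one_of_conjTranspose_mul_self_eq_one (mem_unitaryGroup_iff'.1 hW)

theorem sum_norm_sq_row_eq_one (hW : W ∈ unitaryGroup n ℂ) (i : n) : ∑ j, ‖W i j‖ ^ 2 = 1 := by
  have h := congrFun (congrFun (mem_unitaryGroup_iff.1 hW) i) i
  simp only [mul_apply, star_apply, one_apply_eq, Complex.star_def, Complex.mul_conj'] at h
  exact_mod_cast h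

theorem sum_norm_sq_col_eq_one (hW : W ∈ unitaryGroup n ℂ) (j : n) : ∑ i, ‖W i j‖ ^ 2 = 1 :=
  sum_norm_sq_row_eq_one (transpose_mem_unitaryGroup_iff.2 hW) j

theorem neg_card_le_sum_transposeOverlap (hW : W ∈ unitaryGroup n ℂ) (s t : Finset n) :
    -(#s : ℝ) ≤ ∑ i ∈ s, ∑ j ∈ t, transposeOverlap W i j := by
  have hrow (i : n) : ∑ j ∈ t, ‖W i j‖ ^ 2 ≤ 1 :=
    sum_norm_sq_row_eq_one hW i ▸ sum_le_univ_sum_of_nonneg fun j => sq_nonneg _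
  have hcol (i : n) : ∑ j ∈ t, ‖W j i‖ ^ 2 ≤ 1 :=
    sum_norm_sq_col_eq_one hW i ▸ sum_le_univ_sum_of_nonneg fun j => sq_nonneg _
  have hoverlap (i : n) : -1 ≤ ∑ j ∈ t, transposeOverlap W i j := by
    have h : ∑ j ∈ t, -(‖W i j‖ ^ 2 + ‖W j i‖ ^ 2) ≤ ∑ j ∈ t, 2 * transposeOverlap W i j :=
      sum_le_sum fun j _ => neg_le_two_mul_transposeOverlap W i j
    simp only [sum_neg_distrib, sum_add_distrib, ← mul_sum] at h
    linarith [hrow i, hcol i]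
  calc -(#s : ℝ) = ∑ i ∈ s, (-1) := by simp
    _ ≤ _ := sum_le_sum fun i _ => hoverlap i

theorem neg_card_sub_one_le_sum_transposeOverlap_of_odd (hW : W ∈ unitaryGroup n ℂ)
    (hs : Odd #s) : -((#s : ℝ) - 1) ≤ ∑ i ∈ s, ∑ j ∈ s, transposeOverlap W i j := by
  set B : Matrix s s ℂ := W.submatrix Subtype.val Subtype.val
  have hB : ‖B‖ ≤ 1 :=
    (l2_opNorm_submatrix_le W Subtype.val_injective Subtype.val_injective).trans
      (norm_le_one_of_mem_unitaryGroup hW)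
  have h := neg_card_sub_one_le_sum_transposeOverlap hB (by rwa [Fintype.card_coe])
  rw [Fintype.card_coe] at h
  refine h.trans_eq ?_
  rw [← sum_coe_sort s]
  exact sum_congr rfl fun i _ => sum_coe_sort s (transposeOverlap W i)

theorem two_sub_card_le_sum_transposeOverlap (hW : W ∈ unitaryGroup n ℂ)
    (hn : Odd (Fintype.card n)) :
    2 - (Fintype.card n : ℝ) ≤ ∑ i, ∑ j, transposeOverlap W i j := by
  have hnorm : ∑ i, ∑ j, ‖W i j‖ ^ 2 = (Fintype.card n : ℝ) := by
    simp [sum_norm_sq_row_eq_one hW]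
  linarith [two_mul_sum_transposeOverlap_eq W,
    sum_norm_sub_transpose_sq_le (norm_le_one_of_mem_unitaryGroup hW) hn]

end Overlap

section Pairing

open Finset

/-- The involution of `{0, …, d - 1}` swapping `2 * i` with `2 * i + 1`; when `d` is odd it fixes
`d - 1`. -/
def partner (d i : ℕ) : ℕ :=
  if Odd i then i - 1 else if i + 1 < d then i + 1 else i

theorem partner_lt {d i : ℕ} (hi : i < d) : partner d i < d := by
  grind [partner]

theorem partner_partner {d i : ℕ} (hi : i < d) : partner d (partner d i) = i := by
  grind [partner]

/-- `partner` as a permutation of `Fin d`: the pattern of the optimal matrix. -/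
def pairingPerm (d : ℕ) : Equiv.Perm (Fin d) :=
  Function.Involutive.toPerm (fun i => ⟨partner d i, partner_lt i.2⟩)
    fun i => Fin.ext (partner_partner i.2)

variable {d : ℕ}

theorem pairingPerm_pairingPerm (i : Fin d) : pairingPerm d (pairingPerm d i) = i :=
  Function.Involutive.toPerm_involutive _ i

theorem coe_pairingPerm (i : Fin d) : (pairingPerm d i : ℕ) = partner d i := rfl

/-- The extremal unitary matrix: a direct sum of blocks `!![0, -1; 1, 0]`, followed by a block `1`
when `d` is odd. The sign depends on the column alone because the fixed point `d - 1` of the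
pairing is then even. -/
def signedPairing (d : ℕ) : Matrix (Fin d) (Fin d) ℂ :=
  Matrix.of fun i j => if pairingPerm d i = j then (-1) ^ (j : ℕ) else 0

theorem signedPairing_mem_unitaryGroup : signedPairing d ∈ unitaryGroup (Fin d) ℂ := by
  rw [mem_unitaryGroup_iff]
  ext i j
  obtain rfl | hij := eq_or_ne i j
  · simp [signedPairing, mul_apply, ← pow_add, Even.neg_one_pow ⟨_, rfl⟩]
  · simp [signedPairing, mul_apply, hij, hij.symm]

theorem transposeOverlap_signedPairing (i j : Fin d) :
    transposeOverlap (signedPairing d) i j =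
      if pairingPerm d i = j then if pairingPerm d i = i then 1 else -1 else 0 := by
  by_cases hij : pairingPerm d i = j
  · subst hij
    have hsign : (-1 : ℝ) ^ ((pairingPerm d i : ℕ) + i) =
        if pairingPerm d i = i then 1 else -1 := by
      split_ifs with h
      · exact Even.neg_one_pow (h.symm ▸ ⟨_, rfl⟩)
      · exact Odd.neg_one_pow (by grind [coe_pairingPerm, partner, Fin.ext_iff])
    rw [if_pos rfl, ← hsign]
    simp only [transposeOverlap, signedPairing, of_apply, if_true, pairingPerm_pairingPerm,
      star_pow, star_neg, star_one, ← pow_add]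
    norm_cast
  · simp [transposeOverlap, signedPairing, hij]

theorem sum_transposeOverlap_signedPairing (i : Fin d) (t : Finset (Fin d)) :
    ∑ j ∈ t, transposeOverlap (signedPairing d) i j =
      if pairingPerm d i ∈ t then if pairingPerm d i = i then 1 else -1 else 0 := by
  simp only [transposeOverlap_signedPairing, sum_ite_eq]

theorem sum_Iic_transposeOverlap_signedPairing_of_lt_or_odd {k l : Fin d} (hkl : k ≤ l)
    (h : k < l ∨ Odd (k : ℕ)) :
    ∑ i ∈ Iic k, ∑ j ∈ Iic l, transposeOverlap (signedPairing d) i j = -((k : ℝ) + 1) := by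
  have hrow (i : Fin d) (hi : i ∈ Iic k) :
      ∑ j ∈ Iic l, transposeOverlap (signedPairing d) i j = -1 := by
    have hmem : pairingPerm d i ∈ Iic l := by
      simp only [mem_Iic, Fin.le_def, Fin.lt_def, coe_pairingPerm] at *
      grind [partner]
    have hne : pairingPerm d i ≠ i := by
      simp only [mem_Iic, Fin.le_def, Fin.lt_def, ne_eq, Fin.ext_iff, coe_pairingPerm] at *
      grind [partner]
    rw [sum_transposeOverlap_signedPairing, if_pos hmem, if_neg hne]
  rw [sum_congr rfl hrow]
  simp

theorem sum_Iic_transposeOverlap_signedPairing_of_even {k : Fin d} (hk : Even (k : ℕ)) :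
    ∑ i ∈ Iic k, ∑ j ∈ Iic k, transposeOverlap (signedPairing d) i j =
      if (k : ℕ) + 1 = d then 1 - (k : ℝ) else -k := by
  have hrow (i : Fin d) (hi : i ∈ Iio k) :
      ∑ j ∈ Iic k, transposeOverlap (signedPairing d) i j = -1 := by
    have hmem : pairingPerm d i ∈ Iic k := by
      simp only [mem_Iic, mem_Iio, Fin.le_def, Fin.lt_def, coe_pairingPerm] at *
      grind [partner]
    have hne : pairingPerm d i ≠ i := by
      simp only [mem_Iio, Fin.lt_def, ne_eq, Fin.ext_iff, coe_pairingPerm] at *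
      grind [partner]
    rw [sum_transposeOverlap_signedPairing, if_pos hmem, if_neg hne]
  have hlast : ∑ j ∈ Iic k, transposeOverlap (signedPairing d) k j =
      if (k : ℕ) + 1 = d then 1 else 0 := by
    rw [sum_transposeOverlap_signedPairing]
    simp only [mem_Iic, Fin.le_def, Fin.ext_iff, coe_pairingPerm]
    grind [partner]
  rw [← Iio_insert, sum_insert (by simp), Iio_insert, hlast, sum_congr rfl hrow]
  split_ifs <;> simp [sub_eq_add_neg]

theorem sum_Iic_transposeOverlap_signedPairing_le {W : Matrix (Fin d) (Fin d) ℂ}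
    (hW : W ∈ unitaryGroup (Fin d) ℂ) (k l : Fin d) :
    ∑ i ∈ Iic k, ∑ j ∈ Iic l, transposeOverlap (signedPairing d) i j ≤
      ∑ i ∈ Iic k, ∑ j ∈ Iic l, transposeOverlap W i j := by
  wlog hkl : k ≤ l generalizing k l
  · have hcomm (M : Matrix (Fin d) (Fin d) ℂ) : ∑ i ∈ Iic k, ∑ j ∈ Iic l, transposeOverlap M i j =
        ∑ i ∈ Iic l, ∑ j ∈ Iic k, transposeOverlap M i j := by
      rw [sum_comm]
      simp only [transposeOverlap_comm M]
    rw [hcomm, hcomm]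
    exact this l k (le_of_not_ge hkl)
  have hcard : #(Iic k) = (k : ℕ) + 1 := Fin.card_Iic k
  by_cases h : k < l ∨ Odd (k : ℕ)
  · have hle := neg_card_le_sum_transposeOverlap hW (Iic k) (Iic l)
    rw [hcard] at hle
    rw [sum_Iic_transposeOverlap_signedPairing_of_lt_or_odd hkl h]
    exact_mod_cast hle
  · obtain ⟨hlk, hk⟩ := not_or.1 h
    obtain rfl : k = l := hkl.eq_of_not_lt hlk
    rw [Nat.not_odd_iff_even] at hk
    rw [sum_Iic_transposeOverlap_signedPairing_of_even hk]
    split_ifs with hkd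
    · have huniv : Iic k = univ := eq_univ_of_card _ (by rw [hcard, hkd, Fintype.card_fin])
      have hle := two_sub_card_le_sum_transposeOverlap hW
        (by rw [Fintype.card_fin, ← hkd]; exact hk.add_one)
      have hkd' : (k : ℝ) + 1 = d := mod_cast hkd
      rw [Fintype.card_fin] at hle
      rw [huniv]
      linarith
    · have hle := neg_card_sub_one_le_sum_transposeOverlap_of_odd hW (hcard ▸ hk.add_one)
      rw [hcard] at hle
      push_cast at hle
      linarith

theorem sum_mul_transposeOverlap_signedPairing_le {W : Matrix (Fin d) (Fin d) ℂ}
    (hW : W ∈ unitaryGroup (Fin d) ℂ) {τ : Fin d → ℝ} (hτ : Antitone τ) (hτ₀ : ∀ i, 0 ≤ τ i) :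
    ∑ i, ∑ j, τ i * τ j * transposeOverlap (signedPairing d) i j ≤
      ∑ i, ∑ j, τ i * τ j * transposeOverlap W i j := by
  rw [← sub_nonneg]
  simp only [← sum_sub_distrib, ← mul_sub]
  refine sum_sum_mul_nonneg_of_antitoneOn (hτ.antitoneOn _) (fun i _ => hτ₀ i) (hτ.antitoneOn _)
    (fun i _ => hτ₀ i) fun k _ l _ => ?_
  simp only [filter_ge_eq_Iic, sum_sub_distrib, sub_nonneg]
  exact sum_Iic_transposeOverlap_signedPairing_le hW k l

theorem sum_mul_transposeOverlap_signedPairing_eq (d : ℕ) (σ : ℕ → ℝ) :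
    ∑ i : Fin d, ∑ j : Fin d, σ i * σ j * transposeOverlap (signedPairing d) i j =
      if Even d then
        -2 * ∑ i ∈ range (d / 2), σ (2 * i) * σ (2 * i + 1)
      else
        -2 * ∑ i ∈ range ((d - 1) / 2), σ (2 * i) * σ (2 * i + 1) + σ (d - 1) ^ 2 := by
  have hrow (i : Fin d) : ∑ j : Fin d, σ i * σ j * transposeOverlap (signedPairing d) i j =
      σ i * σ (partner d i) * if partner d i = i then 1 else -1 := by
    simp only [transposeOverlap_signedPairing, mul_ite, mul_zero, sum_ite_eq, mem_univ, if_true,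
      Fin.ext_iff (b := i), coe_pairingPerm]
  have hpair {m : ℕ} (hm : 2 * m ≤ d) : ∑ i ∈ range (2 * m),
      (σ i * σ (partner d i) * if partner d i = i then 1 else -1) =
        -2 * ∑ i ∈ range m, σ (2 * i) * σ (2 * i + 1) := by
    rw [sum_range_two_mul, mul_sum]
    refine sum_congr rfl fun i hi => ?_
    rw [mem_range] at hi
    have h₀ : partner d (2 * i) = 2 * i + 1 := by grind [partner]
    have h₁ : partner d (2 * i + 1) = 2 * i := by grind [partner]
    simp only [h₀, h₁, Nat.succ_ne_self, (Nat.succ_ne_self _).symm, if_false]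
    ring
  simp only [hrow]
  rw [Fin.sum_univ_eq_sum_range
    (fun i => σ i * σ (partner d i) * if partner d i = i then 1 else -1)]
  split_ifs with hd
  · obtain ⟨m, rfl⟩ := hd.two_dvd
    rw [hpair le_rfl, Nat.mul_div_cancel_left m two_pos]
  · obtain ⟨m, rfl⟩ := Nat.not_even_iff_odd.1 hd
    have hfix : partner (2 * m + 1) (2 * m) = 2 * m := by grind [partner]
    rw [sum_range_succ, hpair (Nat.le_succ _), hfix, if_pos rfl, Nat.add_sub_cancel,
      Nat.mul_div_cancel_left m two_pos]
    ring

end Pairing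

section TraceFormula

variable {n : Type*} [Fintype n] [DecidableEq n]

theorem re_trace_mul_map_star_eq_sum_transposeOverlap (U V : Matrix n n ℂ) (τ : n → ℝ) :
    ((U * diagonal (fun i => (τ i : ℂ)) * Vᴴ) *
        (U * diagonal (fun i => (τ i : ℂ)) * Vᴴ).map (starRingEnd ℂ)).trace.re =
      ∑ i, ∑ j, τ i * τ j * transposeOverlap (Vᴴ * U.map (starRingEnd ℂ)) i j := by
  set D : Matrix n n ℂ := diagonal fun i => (τ i : ℂ)
  set W := Vᴴ * U.map (starRingEnd ℂ)
  have hD : D.map (starRingEnd ℂ) = D := by simp [D, diagonal_map]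
  have hW : W.map (starRingEnd ℂ) = Vᴴ.map (starRingEnd ℂ) * U := by
    ext i j
    simp [W, mul_apply]
  have htrace : ((U * D * Vᴴ) * (U * D * Vᴴ).map (starRingEnd ℂ)).trace =
      (D * W * (D * W.map (starRingEnd ℂ))).trace := by
    rw [Matrix.map_mul, Matrix.map_mul, hD, hW, mul_assoc, mul_assoc, trace_mul_comm]
    simp only [W, mul_assoc]
  rw [htrace, trace, Complex.re_sum]
  refine Finset.sum_congr rfl fun i _ => ?_
  rw [diag_apply, mul_apply, Complex.re_sum]
  refine Finset.sum_congr rfl fun j _ => ?_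
  simp only [D, diagonal_mul, map_apply, transposeOverlap, Complex.star_def]
  rw [mul_mul_mul_comm, ← Complex.ofReal_mul, Complex.re_ofReal_mul]

variable {d : ℕ} {τ : Fin d → ℝ}

theorem exists_singVals_and_trace_eq_iff (hτ : ∀ i, 0 ≤ τ i) (t : ℝ) :
    (∃ A : Matrix (Fin d) (Fin d) ℂ, (∃ e : Equiv.Perm (Fin d), ∀ i, singVals A (e i) = τ i) ∧
        t = (A * A.map (starRingEnd ℂ)).trace.re) ↔
      ∃ W ∈ unitaryGroup (Fin d) ℂ, t = ∑ i, ∑ j, τ i * τ j * transposeOverlap W i j := by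
  simp only [exists_perm_singVals_eq_iff hτ]
  constructor
  · rintro ⟨_, ⟨U, hU, V, hV, rfl⟩, rfl⟩
    exact ⟨_, mul_mem (Unitary.star_mem hV) (map_star_mem_unitaryGroup_iff.2 hU),
      re_trace_mul_map_star_eq_sum_transposeOverlap U V τ⟩
  · rintro ⟨W, hW, rfl⟩
    refine ⟨_, ⟨W.map star, map_star_mem_unitaryGroup_iff.2 hW, 1, one_mem _, rfl⟩, ?_⟩
    rw [re_trace_mul_map_star_eq_sum_transposeOverlap]
    simp [Function.comp_def]

end TraceFormula

/-- For prescribed singular values `σ 0 ≥ … ≥ σ (d-1) ≥ 0`, the minimum of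
`tr[A Ā]` (which is always real) over all `A ∈ M_d(ℂ)` with these singular values equals
`-2 ∑ σ_{2i} σ_{2i+1}` for `d` even, and `-2 ∑ σ_{2i} σ_{2i+1} + σ_{d-1}²` for `d` odd. -/
theorem stmt_9 (d : ℕ) (σ : ℕ → ℝ)
    (hnn : ∀ i, i < d → 0 ≤ σ i)
    (hmono : ∀ i j, i ≤ j → j < d → σ j ≤ σ i) :
    IsLeast
      {t : ℝ | ∃ A : Matrix (Fin d) (Fin d) ℂ,
        (∃ e : Equiv.Perm (Fin d), ∀ i : Fin d, singVals A (e i) = σ (i : ℕ)) ∧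
        t = (A * A.map (starRingEnd ℂ)).trace.re}
      (if Even d then
        -2 * ∑ i ∈ Finset.range (d / 2), σ (2 * i) * σ (2 * i + 1)
      else
        -2 * ∑ i ∈ Finset.range ((d - 1) / 2), σ (2 * i) * σ (2 * i + 1) + σ (d - 1) ^ 2) := by
  have hτ : ∀ i : Fin d, 0 ≤ σ i := fun i => hnn i i.2
  have hanti : Antitone fun i : Fin d => σ i := fun i j hij => hmono i j hij j.2
  simp only [exists_singVals_and_trace_eq_iff hτ]
  rw [← sum_mul_transposeOverlap_signedPairing_eq]
  refine ⟨⟨_, signedPairing_mem_unitaryGroup, rfl⟩, ?_⟩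
  rintro _ ⟨W, hW, rfl⟩
  exact sum_mul_transposeOverlap_signedPairing_le hW hanti hτ
end
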